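/- Let k be an algebraically closed field of characteristic 2 and A ∈ k nonzero. Let f = A^{24} B^{48} a^{60} + A^{18} B^{36} a^{45} + A^{16} B^{32} a^{40} + A^{14} B^{28} a^{33} + A^{12} B^{24} a^{28} + A^{10} B^{20} a^{25} + A^{10} B^{20} a^{21} + A^8 B^{16} a^{20} + A^8 B^{16} a^{18} + A^8 B^{16} a^{16} + A^8 B^{16} a^{12} + A^6 B^{12} a^9 + A^4 B^8 a^8 + A^4 B^8 a^6 + A^4 B^8 a^4 + A^2 B^4 a^5 + A^2 B^4 a^3 + A^2 B^4 a + (A + B^2)^4, viewed as a polynomial in a over F_2[A,B]. Then the discriminant of f with respect to a equals A^{1416} B^{2832} (A + B^2)^{176}. In particular, for specific nonzero values A, B ∈ k with A ≠ B^2, the specialization of f in k[a] has 60 distinct roots. -/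

import Mathlib

open Polynomial

namespace Stmt18

/-- The Sylvester matrix of `f` and `g`, regarded as polynomials of degrees `m`
and `n` respectively. -/
noncomputable def sylvester {R : Type*} [CommRing R] (m n : ℕ) (f g : R[X]) :
    Matrix (Fin (m + n)) (Fin (m + n)) R := fun i j =>
  if (i : ℕ) < n then
    (if (i : ℕ) ≤ (j : ℕ) then f.coeff ((j : ℕ) - (i : ℕ)) else 0)
  else
    (if (i : ℕ) - n ≤ (j : ℕ) then g.coeff ((j : ℕ) - ((i : ℕ) - n)) else 0)

/-- The resultant of `f` and `g` (of formal degrees `m`, `n`). -/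
noncomputable def resultant {R : Type*} [CommRing R] (m n : ℕ) (f g : R[X]) : R :=
  (sylvester m n f g).det

/-- The polynomial `f ∈ R[a]`, for `A, B` in the coefficient ring `R`. -/
noncomputable def fpoly {R : Type*} [CommRing R] (A B : R) : R[X] :=
  C (A ^ 24 * B ^ 48) * X ^ 60 + C (A ^ 18 * B ^ 36) * X ^ 45
    + C (A ^ 16 * B ^ 32) * X ^ 40 + C (A ^ 14 * B ^ 28) * X ^ 33
    + C (A ^ 12 * B ^ 24) * X ^ 28 + C (A ^ 10 * B ^ 20) * X ^ 25
    + C (A ^ 10 * B ^ 20) * X ^ 21 + C (A ^ 8 * B ^ 16) * X ^ 20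
    + C (A ^ 8 * B ^ 16) * X ^ 18 + C (A ^ 8 * B ^ 16) * X ^ 16
    + C (A ^ 8 * B ^ 16) * X ^ 12 + C (A ^ 6 * B ^ 12) * X ^ 9
    + C (A ^ 4 * B ^ 8) * X ^ 8 + C (A ^ 4 * B ^ 8) * X ^ 6
    + C (A ^ 4 * B ^ 8) * X ^ 4 + C (A ^ 2 * B ^ 4) * X ^ 5
    + C (A ^ 2 * B ^ 4) * X ^ 3 + C (A ^ 2 * B ^ 4) * X + C ((A + B ^ 2) ^ 4)

/-- The indeterminates `A`, `B` of `F₂[A,B]`. -/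
noncomputable def iA : MvPolynomial (Fin 2) (ZMod 2) := MvPolynomial.X 0
noncomputable def iB : MvPolynomial (Fin 2) (ZMod 2) := MvPolynomial.X 1


/-- The square root of the derivative of f divided by A² B⁴. -/
noncomputable def hpoly {R : Type*} [CommRing R] (A B : R) : R[X] :=
  C (A ^ 8 * B ^ 16) * X ^ 22
    + C (A ^ 6 * B ^ 12) * X ^ 16
    + C (A ^ 4 * B ^ 8) * X ^ 12
    + C (A ^ 4 * B ^ 8) * X ^ 10
    + C (A ^ 2 * B ^ 4) * X ^ 4 + X ^ 2 + X + 1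

/-- The quotient of `f` by `hpoly`. -/
noncomputable def qpoly {R : Type*} [CommRing R] (A B : R) : R[X] :=
  C (A ^ 16 * B ^ 32) * X ^ 38
    + C (A ^ 14 * B ^ 28) * X ^ 32
    + C (A ^ 12 * B ^ 24) * X ^ 28
    + C (A ^ 10 * B ^ 20) * X ^ 23
    + C (A ^ 8 * B ^ 16) * X ^ 18
    + C (A ^ 8 * B ^ 16) * X ^ 14
    + C (A ^ 6 * B ^ 12) * X ^ 13
    + C (A ^ 6 * B ^ 12) * X ^ 11
    + C (A ^ 6 * B ^ 12) * X ^ 8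
    + C (A ^ 4 * B ^ 8) * X ^ 6
    + C (A ^ 4 * B ^ 8) * X ^ 4
    + C (A ^ 2 * B ^ 4) * X ^ 3
    + C (A ^ 2 * B ^ 4) * X ^ 2
    + C (A ^ 2 * B ^ 4) * X ^ 1

lemma isCoprime_left {R : Type*} [CommRing R] {x : R} (hx : IsUnit x) (y : R) :
    IsCoprime x y := by
  obtain ⟨b, hb⟩ := hx.exists_left_inv
  exact ⟨b, 0, by simp [hb]⟩

lemma resultant_eq {R : Type*} [CommRing R] (m n : ℕ) (f g : R[X])
    (hf : f.natDegree ≤ m) (hg : g.natDegree ≤ n) :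
    resultant m n f g = Polynomial.resultant g f n m := by
  unfold resultant Polynomial.resultant
  rw [← Matrix.det_transpose, ← Matrix.det_submatrix_equiv_self (finCongr (Nat.add_comm n m))]
  congr 1
  ext i j
  simp only [Matrix.submatrix_apply, Matrix.transpose_apply, sylvester, Polynomial.sylvester,
    Matrix.of_apply]
  induction j using Fin.addCases with
  | left j =>
    simp only [Fin.addCases_left, finCongr_apply, Fin.val_cast, Fin.val_castAdd, j.2, if_true,
      Set.mem_Icc]
    by_cases h1 : (j : ℕ) ≤ i
    · by_cases h2 : (i : ℕ) ≤ j + m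
      · simp [h1, h2]
      · simp only [h1, h2, if_true, and_false, if_false]
        exact coeff_eq_zero_of_natDegree_lt (by omega)
    · simp [h1]
  | right j =>
    simp only [Fin.addCases_right, finCongr_apply, Fin.val_cast, Fin.val_natAdd,
      Set.mem_Icc, Nat.add_sub_cancel_left, Nat.not_lt.2 (Nat.le_add_right n j), if_false]
    by_cases h1 : (j : ℕ) ≤ i
    · by_cases h2 : (i : ℕ) ≤ j + n
      · simp [h1, h2]
      · simp only [h1, h2, if_true, and_false, if_false]
        exact coeff_eq_zero_of_natDegree_lt (by omega)
    · simp [h1]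

section
variable {R : Type*} [CommRing R] [CharP R 2] (A B : R)

lemma fpoly_eq : fpoly A B = C ((A + B ^ 2) ^ 4) + hpoly A B * qpoly A B := by
  have h2 : (2 : R[X]) = 0 := CharTwo.two_eq_zero
  unfold fpoly hpoly qpoly
  simp only [map_add, map_mul, map_pow]
  grind

lemma derivative_fpoly : derivative (fpoly A B) = C (A ^ 2 * B ^ 4) * (hpoly A B) ^ 2 := by
  have h2 : (2 : R[X]) = 0 := CharTwo.two_eq_zero
  unfold fpoly hpoly
  simp only [derivative_add, derivative_C_mul, derivative_X_pow, derivative_X, derivative_C]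
  simp only [map_add, map_mul, map_pow, map_natCast]
  norm_num
  grind

end

lemma natDegree_fpoly_le {R : Type*} [CommRing R] (A B : R) : (fpoly A B).natDegree ≤ 60 := by
  unfold fpoly; compute_degree

lemma natDegree_qpoly_le {R : Type*} [CommRing R] (A B : R) : (qpoly A B).natDegree ≤ 38 := by
  unfold qpoly; compute_degree

lemma natDegree_hpoly_le {R : Type*} [CommRing R] (A B : R) : (hpoly A B).natDegree ≤ 22 := by
  unfold hpoly; compute_degree

lemma coeff_fpoly {R : Type*} [CommRing R] (A B : R) :
    (fpoly A B).coeff 60 = A ^ 24 * B ^ 48 := by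
  simp [fpoly, coeff_X, coeff_C, -map_add, -map_pow, -map_mul]

lemma coeff_hpoly {R : Type*} [CommRing R] (A B : R) :
    (hpoly A B).coeff 22 = A ^ 8 * B ^ 16 := by
  simp [hpoly, coeff_X, coeff_one, -map_add, -map_pow, -map_mul]

lemma natDegree_fpoly {R : Type*} [CommRing R] [IsDomain R] (A B : R) (hA : A ≠ 0)
    (hB : B ≠ 0) : (fpoly A B).natDegree = 60 := by
  apply natDegree_eq_of_le_of_coeff_ne_zero (natDegree_fpoly_le A B)
  rw [coeff_fpoly]; positivity

lemma natDegree_hpoly {R : Type*} [CommRing R] [IsDomain R] (A B : R) (hA : A ≠ 0)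
    (hB : B ≠ 0) : (hpoly A B).natDegree = 22 := by
  apply natDegree_eq_of_le_of_coeff_ne_zero (natDegree_hpoly_le A B)
  rw [coeff_hpoly]; positivity

lemma res_f_h {R : Type*} [CommRing R] [CharP R 2] (A B : R) :
    Polynomial.resultant (hpoly A B) (fpoly A B) 22 60
      = (A ^ 8 * B ^ 16) ^ 60 * ((A + B ^ 2) ^ 4) ^ 22 := by
  have hq := natDegree_qpoly_le A B
  rw [fpoly_eq, resultant_add_mul_right _ _ _ _ _ (by omega) (natDegree_hpoly_le A B),
    resultant_C_right, coeff_hpoly]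

lemma res_main {R : Type*} [CommRing R] [IsDomain R] [CharP R 2] (A B : R) (hA : A ≠ 0)
    (hB : B ≠ 0) :
    resultant 60 59 (fpoly A B) (derivative (fpoly A B))
      = (A ^ 24 * B ^ 48) * (A ^ 1416 * B ^ 2832 * (A + B ^ 2) ^ 176) := by
  have hd := natDegree_fpoly A B hA hB
  have hh := natDegree_hpoly A B hA hB
  rw [resultant_eq _ _ _ _ hd.le ((natDegree_derivative_le _).trans (by omega)),
    derivative_fpoly, resultant_C_mul_left, show (59 : ℕ) = 44 + 15 from rfl,
    resultant_add_left_deg _ _ _ _ _ (by rw [natDegree_pow, hh]), coeff_fpoly]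
  have h1 := resultant_mul_left (hpoly A B) (hpoly A B) (fpoly A B) 60 hd.le
  rw [hh, res_f_h, ← pow_two] at h1
  rw [show (44 : ℕ) = 22 + 22 from rfl, h1]
  have h3 : ((-1 : R)) ^ (60 * 15) = 1 := Even.neg_one_pow (by decide)
  rw [h3]
  simp only [mul_pow, ← pow_mul]
  norm_num1
  generalize A + B ^ 2 = s
  clear h1 h3 hh hd hA hB
  ring

/-- The discriminant of `f ∈ F₂[A,B][a]` with respect to `a` equals
`A¹⁴¹⁶ B²⁸³² (A + B²)¹⁷⁶` — expressed below (avoiding division, and noting that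
in characteristic 2 the sign in `Res(f, f') = ± lc(f)·Disc(f)` is irrelevant) as
`Res_a(f, f') = lc(f) · A¹⁴¹⁶ B²⁸³² (A + B²)¹⁷⁶`.  In particular, for nonzero
`A, B` in an algebraically closed field `k` of characteristic 2 with `A ≠ B²`,
the specialization of `f` in `k[a]` has 60 distinct roots. -/
theorem stmt_18 (k : Type*) [Field k] [IsAlgClosed k] [CharP k 2] [DecidableEq k] :
    resultant 60 59 (fpoly iA iB) (derivative (fpoly iA iB))
        = (fpoly iA iB).leadingCoeff
            * (iA ^ 1416 * iB ^ 2832 * (iA + iB ^ 2) ^ 176) ∧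
    ∀ A B : k, A ≠ 0 → B ≠ 0 → A ≠ B ^ 2 →
      ((fpoly A B).roots.toFinset.card = 60) := by
  refine ⟨?_, ?_⟩
  · have hA : iA ≠ 0 := MvPolynomial.X_ne_zero 0
    have hB : iB ≠ 0 := MvPolynomial.X_ne_zero 1
    rw [res_main iA iB hA hB, leadingCoeff, natDegree_fpoly iA iB hA hB, coeff_fpoly]
  · intro A B hA hB hAB
    have hs : (A + B ^ 2) ^ 4 ≠ 0 := by
      apply pow_ne_zero
      rw [← CharTwo.sub_eq_add]
      exact sub_ne_zero.2 hAB
    have hch : IsCoprime (fpoly A B) (hpoly A B) := by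
      rw [fpoly_eq]
      apply IsCoprime.add_mul_left_left
      exact isCoprime_left (isUnit_C.2 hs.isUnit) _
    have hsep : (fpoly A B).Separable := by
      rw [Polynomial.Separable, derivative_fpoly]
      apply IsCoprime.mul_right _ hch.pow_right
      have hu : IsUnit (C (A ^ 2 * B ^ 4)) :=
        isUnit_C.2 (IsUnit.mk0 _ (mul_ne_zero (pow_ne_zero _ hA) (pow_ne_zero _ hB)))
      exact (isCoprime_left hu _).symm
    rw [Multiset.toFinset_card_of_nodup (nodup_roots hsep),
      ← (IsAlgClosed.splits (fpoly A B)).natDegree_eq_card_roots, natDegree_fpoly A B hA hB]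

end Stmt18
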